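/- Assume N ≥ 2. For every nonnegative weight vector w ∈ ℝ^N, the algebraic connectivity of the supra-Laplacian satisfies λ₂(L(w)) ≤ (1/2) · λ₂(L₁ + L₂). -/

import Mathlib

open Matrix

/-- The supra-Laplacian of a two-layer multiplex with layer Laplacians `L₁`, `L₂`
and one-to-one inter-layer weights `w`: the block matrix
`[[L₁ + W, −W], [−W, L₂ + W]]` with `W = diag w`. -/
noncomputable def supraLaplacian {N : ℕ} (L₁ L₂ : Matrix (Fin N) (Fin N) ℝ)
    (w : Fin N → ℝ) : Matrix (Fin N ⊕ Fin N) (Fin N ⊕ Fin N) ℝ :=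
  Matrix.fromBlocks (L₁ + Matrix.diagonal w) (-Matrix.diagonal w)
    (-Matrix.diagonal w) (L₂ + Matrix.diagonal w)

/-- Algebraic connectivity: the minimum of `vᵀ M v` over unit vectors `v`
orthogonal to the all-ones vector (the minimum is attained, so it equals the inf). -/
noncomputable def lambda2 {n : Type*} [Fintype n] (M : Matrix n n ℝ) : ℝ :=
  sInf {x : ℝ | ∃ v : n → ℝ, v ⬝ᵥ v = 1 ∧ v ⬝ᵥ (fun _ => 1) = 0 ∧ x = v ⬝ᵥ M *ᵥ v}

lemma supra_quad {N : ℕ} (L₁ L₂ : Matrix (Fin N) (Fin N) ℝ) (w a b : Fin N → ℝ) :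
    Sum.elim a b ⬝ᵥ supraLaplacian L₁ L₂ w *ᵥ Sum.elim a b
      = a ⬝ᵥ L₁ *ᵥ a + b ⬝ᵥ L₂ *ᵥ b + ∑ i, w i * (a i - b i) ^ 2 := by
  have h : ∑ i, w i * (a i - b i) ^ 2 =
      a ⬝ᵥ diagonal w *ᵥ a - a ⬝ᵥ diagonal w *ᵥ b - b ⬝ᵥ diagonal w *ᵥ a
        + b ⬝ᵥ diagonal w *ᵥ b := by
    simp only [dotProduct, mulVec_diagonal, ← Finset.sum_sub_distrib, ← Finset.sum_add_distrib]
    refine Finset.sum_congr rfl fun i _ => ?_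
    ring
  rw [h, supraLaplacian, fromBlocks_mulVec, sumElim_dotProduct_sumElim]
  simp only [Sum.elim_comp_inl, Sum.elim_comp_inr, add_mulVec, neg_mulVec, dotProduct_add,
    dotProduct_neg]
  ring

theorem stmt9 {N : ℕ} (hN : 2 ≤ N)
    (L₁ L₂ : Matrix (Fin N) (Fin N) ℝ)
    (hL₁ : L₁.PosSemidef) (hL₂ : L₂.PosSemidef)
    (hL₁1 : L₁ *ᵥ (fun _ => 1) = 0) (hL₂1 : L₂ *ᵥ (fun _ => 1) = 0)
    (w : Fin N → ℝ) (hw : ∀ i, 0 ≤ w i) :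
    lambda2 (supraLaplacian L₁ L₂ w) ≤ (1 / 2) * lambda2 (L₁ + L₂) := by
  have hs : (√2 : ℝ)⁻¹ * (√2)⁻¹ = 1 / 2 := by
    rw [← mul_inv, Real.mul_self_sqrt (by norm_num)]; norm_num
  suffices h : 2 * lambda2 (supraLaplacian L₁ L₂ w) ≤ lambda2 (L₁ + L₂) by linarith
  conv_rhs => rw [lambda2]
  apply le_csInf
  · let i : Fin N := ⟨0, by omega⟩
    let j : Fin N := ⟨1, by omega⟩
    have hij : i ≠ j := by simp [i, j]
    refine ⟨_, (√2)⁻¹ • (Pi.single i 1 - Pi.single j 1), ?_, ?_, rfl⟩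
    · simp only [smul_dotProduct, dotProduct_smul, smul_eq_mul]
      rw [← mul_assoc, hs]
      simp [sub_dotProduct, dotProduct_sub, hij, hij.symm]
      norm_num
    · simp [sub_dotProduct]
  · rintro x ⟨u, hu, hu1, rfl⟩
    have key : lambda2 (supraLaplacian L₁ L₂ w) ≤ (1 / 2) * (u ⬝ᵥ (L₁ + L₂) *ᵥ u) := by
      apply csInf_le
      · refine ⟨0, ?_⟩
        rintro x ⟨v, -, -, rfl⟩
        rw [← Sum.elim_comp_inl_inr v, supra_quad]
        have h1 := hL₁.dotProduct_mulVec_nonneg (v ∘ Sum.inl)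
        have h2 := hL₂.dotProduct_mulVec_nonneg (v ∘ Sum.inr)
        simp only [star_trivial] at h1 h2
        have h3 : 0 ≤ ∑ i, w i * ((v ∘ Sum.inl) i - (v ∘ Sum.inr) i) ^ 2 :=
          Finset.sum_nonneg fun i _ => mul_nonneg (hw i) (sq_nonneg _)
        linarith
      · refine ⟨Sum.elim ((√2)⁻¹ • u) ((√2)⁻¹ • u), ?_, ?_, ?_⟩
        · rw [sumElim_dotProduct_sumElim]
          simp only [smul_dotProduct, dotProduct_smul, smul_eq_mul]
          rw [← mul_assoc, hs, hu]
          norm_num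
        · have : (fun _ => 1 : Fin N ⊕ Fin N → ℝ) = Sum.elim (fun _ => 1) (fun _ => 1) := by
            ext i; cases i <;> rfl
          rw [this, sumElim_dotProduct_sumElim]
          simp only [smul_dotProduct, hu1]
          simp
        · rw [supra_quad]
          simp only [mulVec_smul, smul_dotProduct, dotProduct_smul, smul_eq_mul, sub_self,
            add_mulVec, dotProduct_add]
          rw [← mul_assoc, ← mul_assoc, hs]
          simp
          ring
    linarith
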